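/- Let n ≥ 1, let H₁, H₂ : 𝕋^n × ℝ^n → ℝ be continuous and satisfy (A1), and let c₁, c₂ > 0. Then there exists (v₁, v₂, H̄₁, H̄₂) ∈ W^{1,∞}(𝕋^n)² × ℝ² such that (v₁, v₂) is a viscosity solution of the cell system H₁(x, Dv₁) + c₁(v₁ − v₂) = H̄₁, H₂(x, Dv₂) + c₂(v₂ − v₁) = H̄₂ in 𝕋^n. Moreover, the combination c₂H̄₁ + c₁H̄₂ is unique: if (w₁, w₂, K̄₁, K̄₂) is any other such viscosity solution with constants (K̄₁, K̄₂), then c₂H̄₁ + c₁H̄₂ = c₂K̄₁ + c₁K̄₂. -/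

import Mathlib

open MeasureTheory Filter Topology Set

noncomputable section

/-- Euclidean space `ℝ^n`; the torus `𝕋^n` is modelled by `ℤ^n`-periodic functions on it. -/
abbrev En (n : ℕ) : Type := EuclideanSpace ℝ (Fin n)

/-- The integer vector `k ∈ ℤ^n` viewed as an element of `ℝ^n`. -/
def intVec (n : ℕ) (k : Fin n → ℤ) : En n := WithLp.toLp 2 (fun i => (k i : ℝ))

/-- A `ℤ^n`-periodic function on `ℝ^n`, i.e. a function on the torus `𝕋^n`. -/
def ZPeriodic {n : ℕ} (f : En n → ℝ) : Prop :=
  ∀ (x : En n) (k : Fin n → ℤ), f (x + intVec n k) = f x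

/-- A Hamiltonian `H : 𝕋^n × ℝ^n → ℝ` (periodic in the first variable). -/
def ZPeriodicH {n : ℕ} (H : En n → En n → ℝ) : Prop :=
  ∀ (x : En n) (k : Fin n → ℤ) (p : En n), H (x + intVec n k) p = H x p

/-- A function on `𝕋^n × ℝ` (space-time, periodic in space). -/
def ZPeriodicST {n : ℕ} (u : En n × ℝ → ℝ) : Prop :=
  ∀ (x : En n) (k : Fin n → ℤ) (t : ℝ), u (x + intVec n k, t) = u (x, t)

/-- (A1): coercivity, `lim_{r→∞} inf{H(x,p) : x ∈ 𝕋^n, |p| ≥ r} = ∞`. -/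
def Coercive {n : ℕ} (H : En n → En n → ℝ) : Prop :=
  ∀ M : ℝ, ∃ r : ℝ, ∀ (x p : En n), r ≤ ‖p‖ → M ≤ H x p

/-- Coercivity for an `x`-independent Hamiltonian. -/
def CoerciveP {n : ℕ} (H : En n → ℝ) : Prop :=
  ∀ M : ℝ, ∃ r : ℝ, ∀ p : En n, r ≤ ‖p‖ → M ≤ H p

/-- Lipschitz continuity (membership in `W^{1,∞}`). -/
def IsLip {n : ℕ} (f : En n → ℝ) : Prop := ∃ K : NNReal, LipschitzWith K f

/-- Viscosity subsolution inequality for one stationary equation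
`H(x, Dw) + c (w - wo) ≤ ρ(x)` of a weakly coupled system. -/
def StatSubIneq {n : ℕ} (H : En n → En n → ℝ) (c : ℝ) (w wo : En n → ℝ) (ρ : En n → ℝ) : Prop :=
  ∀ φ : En n → ℝ, ContDiff ℝ 1 φ →
    ∀ x₀ : En n, IsLocalMax (fun x => w x - φ x) x₀ →
      H x₀ (gradient φ x₀) + c * (w x₀ - wo x₀) ≤ ρ x₀

/-- Viscosity supersolution inequality for one stationary equation. -/
def StatSuperIneq {n : ℕ} (H : En n → En n → ℝ) (c : ℝ) (w wo : En n → ℝ) (ρ : En n → ℝ) : Prop :=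
  ∀ φ : En n → ℝ, ContDiff ℝ 1 φ →
    ∀ x₀ : En n, IsLocalMin (fun x => w x - φ x) x₀ →
      ρ x₀ ≤ H x₀ (gradient φ x₀) + c * (w x₀ - wo x₀)

/-- Viscosity subsolution of the stationary system
`Hᵢ(x, Dwᵢ) + cᵢ (wᵢ - wⱼ) = ρᵢ(x)`, `i = 1,2`. -/
def CellSub {n : ℕ} (H₁ H₂ : En n → En n → ℝ) (c₁ c₂ : ℝ) (w₁ w₂ : En n → ℝ)
    (ρ₁ ρ₂ : En n → ℝ) : Prop :=
  StatSubIneq H₁ c₁ w₁ w₂ ρ₁ ∧ StatSubIneq H₂ c₂ w₂ w₁ ρ₂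

/-- Viscosity supersolution of the stationary system. -/
def CellSuper {n : ℕ} (H₁ H₂ : En n → En n → ℝ) (c₁ c₂ : ℝ) (w₁ w₂ : En n → ℝ)
    (ρ₁ ρ₂ : En n → ℝ) : Prop :=
  StatSuperIneq H₁ c₁ w₁ w₂ ρ₁ ∧ StatSuperIneq H₂ c₂ w₂ w₁ ρ₂

/-- Viscosity solution (continuous, sub- and supersolution) of the stationary system. -/
def CellSolution {n : ℕ} (H₁ H₂ : En n → En n → ℝ) (c₁ c₂ : ℝ) (v₁ v₂ : En n → ℝ)
    (ρ₁ ρ₂ : En n → ℝ) : Prop :=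
  Continuous v₁ ∧ Continuous v₂ ∧
    CellSub H₁ H₂ c₁ c₂ v₁ v₂ ρ₁ ρ₂ ∧ CellSuper H₁ H₂ c₁ c₂ v₁ v₂ ρ₁ ρ₂

/-- Subsolution of the ergodic problem (E) with constant `c` (coupling constants 1). -/
def ErgSub {n : ℕ} (H₁ H₂ : En n → En n → ℝ) (v₁ v₂ : En n → ℝ) (c : ℝ) : Prop :=
  CellSub H₁ H₂ 1 1 v₁ v₂ (fun _ => c) (fun _ => c)

/-- Supersolution of the ergodic problem (E). -/
def ErgSuper {n : ℕ} (H₁ H₂ : En n → En n → ℝ) (v₁ v₂ : En n → ℝ) (c : ℝ) : Prop :=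
  CellSuper H₁ H₂ 1 1 v₁ v₂ (fun _ => c) (fun _ => c)

/-- Viscosity solution of the ergodic problem (E):
`H₁(x,Dv₁) + v₁ - v₂ = c`, `H₂(x,Dv₂) + v₂ - v₁ = c` on `𝕋^n`. -/
def ErgSolution {n : ℕ} (H₁ H₂ : En n → En n → ℝ) (v₁ v₂ : En n → ℝ) (c : ℝ) : Prop :=
  CellSolution H₁ H₂ 1 1 v₁ v₂ (fun _ => c) (fun _ => c)

/-- Viscosity subsolution inequality for one evolution equation
`∂ₜ u + H(x, Du) + u - uo ≤ 0` in `𝕋^n × (0,∞)`. -/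
def EvolSubIneq {n : ℕ} (H : En n → En n → ℝ) (u uo : En n × ℝ → ℝ) : Prop :=
  ∀ φ : En n × ℝ → ℝ, ContDiff ℝ 1 φ →
    ∀ (x₀ : En n) (t₀ : ℝ), 0 < t₀ →
      IsLocalMax (fun q => u q - φ q) (x₀, t₀) →
      fderiv ℝ φ (x₀, t₀) (0, 1) + H x₀ (gradient (fun y => φ (y, t₀)) x₀)
        + u (x₀, t₀) - uo (x₀, t₀) ≤ 0

/-- Viscosity supersolution inequality for one evolution equation. -/
def EvolSuperIneq {n : ℕ} (H : En n → En n → ℝ) (u uo : En n × ℝ → ℝ) : Prop :=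
  ∀ φ : En n × ℝ → ℝ, ContDiff ℝ 1 φ →
    ∀ (x₀ : En n) (t₀ : ℝ), 0 < t₀ →
      IsLocalMin (fun q => u q - φ q) (x₀, t₀) →
      0 ≤ fderiv ℝ φ (x₀, t₀) (0, 1) + H x₀ (gradient (fun y => φ (y, t₀)) x₀)
        + u (x₀, t₀) - uo (x₀, t₀)

/-- Viscosity subsolution of system (C) (with coupling constants `c₁ = c₂ = 1`). -/
def SysSub {n : ℕ} (H₁ H₂ : En n → En n → ℝ) (u₁ u₂ : En n × ℝ → ℝ) : Prop :=
  EvolSubIneq H₁ u₁ u₂ ∧ EvolSubIneq H₂ u₂ u₁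

/-- Viscosity supersolution of system (C). -/
def SysSuper {n : ℕ} (H₁ H₂ : En n → En n → ℝ) (u₁ u₂ : En n × ℝ → ℝ) : Prop :=
  EvolSuperIneq H₁ u₁ u₂ ∧ EvolSuperIneq H₂ u₂ u₁

/-- Viscosity solution of the Cauchy problem (C): continuous on `𝕋^n × [0,∞)`,
sub- and supersolution, attaining the initial data. -/
def SysSolution {n : ℕ} (H₁ H₂ : En n → En n → ℝ) (u₀₁ u₀₂ : En n → ℝ)
    (u₁ u₂ : En n × ℝ → ℝ) : Prop :=
  ContinuousOn u₁ {q : En n × ℝ | 0 ≤ q.2} ∧ ContinuousOn u₂ {q : En n × ℝ | 0 ≤ q.2} ∧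
    SysSub H₁ H₂ u₁ u₂ ∧ SysSuper H₁ H₂ u₁ u₂ ∧
    (∀ x, u₁ (x, 0) = u₀₁ x) ∧ (∀ x, u₂ (x, 0) = u₀₂ x)

/-- Viscosity subsolution of the single stationary equation `H(x,Dv) ≤ c` on `𝕋^n`. -/
def SingleSub {n : ℕ} (H : En n → En n → ℝ) (v : En n → ℝ) (c : ℝ) : Prop :=
  ∀ φ : En n → ℝ, ContDiff ℝ 1 φ →
    ∀ x₀ : En n, IsLocalMax (fun x => v x - φ x) x₀ → H x₀ (gradient φ x₀) ≤ c

/-- Viscosity supersolution of the single stationary equation `H(x,Dv) ≥ c` on `𝕋^n`. -/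
def SingleSuper {n : ℕ} (H : En n → En n → ℝ) (v : En n → ℝ) (c : ℝ) : Prop :=
  ∀ φ : En n → ℝ, ContDiff ℝ 1 φ →
    ∀ x₀ : En n, IsLocalMin (fun x => v x - φ x) x₀ → c ≤ H x₀ (gradient φ x₀)

/-- Viscosity solution of the single stationary equation `H(x,Dv) = c` on `𝕋^n`. -/
def SingleSolution {n : ℕ} (H : En n → En n → ℝ) (v : En n → ℝ) (c : ℝ) : Prop :=
  Continuous v ∧ SingleSub H v c ∧ SingleSuper H v c

/-- Uniform convergence `u(·,t) → v` on `𝕋^n` as `t → ∞`. -/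
def UnifTendsTo {n : ℕ} (u : En n × ℝ → ℝ) (v : En n → ℝ) : Prop :=
  ∀ ε : ℝ, 0 < ε → ∃ T : ℝ, ∀ t : ℝ, T ≤ t → ∀ x : En n, |u (x, t) - v x| ≤ ε

/-- (A8)⁺ at level `η` with constant `ψ`. -/
def A8plusAt {n : ℕ} (H : En n → En n → ℝ) (η ψ : ℝ) : Prop :=
  ∀ (x p q : En n), η ≤ H x (p + q) → H x q ≤ 0 →
    ∀ μ : ℝ, 0 < μ → μ ≤ 1 → H x (p + q) + ψ * (1 - μ) ≤ μ * H x (μ⁻¹ • p + q)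

/-- (A8)⁻ at level `η` with constant `ψ`. -/
def A8minusAt {n : ℕ} (H : En n → En n → ℝ) (η ψ : ℝ) : Prop :=
  ∀ (x p q : En n), H x (p + q) ≤ -η → 0 ≤ H x q →
    ∀ μ : ℝ, 1 ≤ μ → μ * H x (μ⁻¹ • p + q) ≤ H x (p + q) - ψ * (μ - 1) / μ

/-- (A8)⁺ with threshold `η₀`. -/
def A8plus {n : ℕ} (H : En n → En n → ℝ) (η₀ : ℝ) : Prop :=
  ∀ η : ℝ, 0 < η → η ≤ η₀ → ∃ ψ : ℝ, 0 < ψ ∧ A8plusAt H η ψ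

/-- (A8)⁻ with threshold `η₀`. -/
def A8minus {n : ℕ} (H : En n → En n → ℝ) (η₀ : ℝ) : Prop :=
  ∀ η : ℝ, 0 < η → η ≤ η₀ → ∃ ψ : ℝ, 0 < ψ ∧ A8minusAt H η ψ

/-- The function `F` of the Key Lemma: `F(r) = C r` for `r ≥ 0`, `F(r) = r / C` for `r < 0`. -/
def Fc (C r : ℝ) : ℝ := if 0 ≤ r then C * r else r / C

/-- `α_η⁺(s)` (resp. `β_η⁺(s)` with `u = u₂`):
`min_{x ∈ 𝕋^n, t ≥ s} (u(x,t) - v(x) + η (t-s)) / (u(x,s) - v(x))`. -/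
def alphaPlus {n : ℕ} (u : En n × ℝ → ℝ) (v : En n → ℝ) (η s : ℝ) : ℝ :=
  sInf {r : ℝ | ∃ (x : En n) (t : ℝ), s ≤ t ∧
    r = (u (x, t) - v x + η * (t - s)) / (u (x, s) - v x)}

/-- `α_η⁻(s)` (resp. `β_η⁻(s)` with `u = u₂`):
`max_{x ∈ 𝕋^n, t ≥ s} (u(x,t) - v(x) - η (t-s)) / (u(x,s) - v(x))`. -/
def alphaMinus {n : ℕ} (u : En n × ℝ → ℝ) (v : En n → ℝ) (η s : ℝ) : ℝ :=
  sSup {r : ℝ | ∃ (x : En n) (t : ℝ), s ≤ t ∧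
    r = (u (x, t) - v x - η * (t - s)) / (u (x, s) - v x)}

/-- (A9)⁺. -/
def A9plus {n : ℕ} (H : En n → En n → ℝ) : Prop :=
  ∃ K : Set (En n), IsClosed K ∧ (∀ x ∈ K, ∀ k : Fin n → ℤ, x + intVec n k ∈ K) ∧
    (∀ x ∈ K, (∀ p : En n, 0 ≤ H x p) ∧ ∃ p : En n, H x p = 0) ∧
    (∀ ε : ℝ, 0 < ε → ∃ η₀ : ℝ, 0 < η₀ ∧ ∃ ψ : ℝ → ℝ, (∀ r : ℝ, 0 < r → 0 < ψ r) ∧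
      ∀ η : ℝ, 0 < η → η ≤ η₀ → ∀ (x p q : En n), ε ≤ Metric.infDist x K →
        η ≤ H x (p + q) → H x q ≤ 0 →
        ∀ μ : ℝ, 0 < μ → μ ≤ 1 → H x (p + q) + ψ η * (1 - μ) ≤ μ * H x (μ⁻¹ • p + q))

/-- (A9)⁻. -/
def A9minus {n : ℕ} (H : En n → En n → ℝ) : Prop :=
  ∃ K : Set (En n), IsClosed K ∧ (∀ x ∈ K, ∀ k : Fin n → ℤ, x + intVec n k ∈ K) ∧
    (∀ x ∈ K, (∀ p : En n, 0 ≤ H x p) ∧ ∃ p : En n, H x p = 0) ∧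
    (∀ ε : ℝ, 0 < ε → ∃ η₀ : ℝ, 0 < η₀ ∧ ∃ ψ : ℝ → ℝ, (∀ r : ℝ, 0 < r → 0 < ψ r) ∧
      ∀ η : ℝ, 0 < η → η ≤ η₀ → ∀ (x p q : En n), ε ≤ Metric.infDist x K →
        H x (p + q) ≤ -η → 0 ≤ H x q →
        ∀ μ : ℝ, 1 ≤ μ → μ * H x (μ⁻¹ • p + q) ≤ H x (p + q) - ψ η * (μ - 1) / μ)

/-- (A6): uniform convexity of an `x`-independent Hamiltonian. -/
def UnifConvex {n : ℕ} (H : En n → ℝ) : Prop :=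
  ∃ α : ℝ, 0 < α ∧ ∀ᵐ q : En n ∂volume, DifferentiableAt ℝ H q ∧
    ∀ p : En n, H q + fderiv ℝ H q (p - q) + α * ‖p - q‖ ^ 2 ≤ H p

end

/-!
Existence is the vanishing discount method. For `l > 0`, Perron's method solves the discounted
system `l uᵢ + Hᵢ(x, Duᵢ) + cᵢ (uᵢ - uⱼ) = 0` between the constants `± C / l`, where
`C = sup |Hᵢ(x, 0)|`. Since `l uᵢ ≥ -C` and each `Hᵢ` is bounded below, the equation itself bounds
`uᵢ - uⱼ`, and coercivity then bounds `Duᵢ`, all uniformly in `l`. Hence `uᵢ - u₁(0)` and `l u₁(0)`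
converge along an ultrafilter as `l → 0`, and the limit solves the cell system with both constants
equal to `-lim l u₁(0)`.

For uniqueness, let `v` be a subsolution with constants `hᵢ`, `w` a supersolution with constants
`kᵢ`, and `Mᵢ = max (vᵢ - wᵢ)`. Doubling variables produces a maximum point of `vᵢ - wᵢ` with a
common gradient `p`; subtracting the two inequalities there cancels `Hᵢ(x, p)` and leaves
`kᵢ - hᵢ ≤ cᵢ (Mⱼ - Mᵢ)`. In the combination of weights `c₂`, `c₁` the right-hand sides cancel.
-/

section Gradient

open scoped Gradient

variable {E : Type*} [NormedAddCommGroup E] [InnerProductSpace ℝ E]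

theorem exists_contDiff_eventuallyEq {F : Type*} [NormedAddCommGroup F] [NormedSpace ℝ F]
    {m : ℕ} {φ : E → F} {y : E} (hφ : ContDiffAt ℝ m φ y) :
    ∃ ψ : E → F, ContDiff ℝ m ψ ∧ ψ =ᶠ[𝓝 y] φ := by
  obtain ⟨r, hr, hball⟩ := Metric.eventually_nhds_iff_ball.1 (hφ.eventually (by simp))
  let χ : ContDiffBump y := ⟨r / 4, r / 2, by positivity, by linarith⟩
  refine ⟨fun z => χ z • φ z, contDiff_iff_contDiffAt.2 fun z => ?_, ?_⟩
  · by_cases hz : z ∈ Metric.ball y r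
    · exact χ.contDiff.contDiffAt.smul (hball z hz)
    · have hz' : z ∉ tsupport χ := by
        rw [χ.tsupport_eq]
        exact fun h => hz (Metric.closedBall_subset_ball (by change r / 2 < r; linarith) h)
      refine contDiffAt_const.congr_of_eventuallyEq (f := fun _ => (0 : F)) ?_
      filter_upwards [notMem_tsupport_iff_eventuallyEq.1 hz'] with x hx
      simp [hx]
  · filter_upwards [χ.eventuallyEq_one] with z hz
    simp [hz]

theorem contDiff_const_mul_norm_sub_sq (A : ℝ) (x₀ : E) :
    ContDiff ℝ 1 fun x : E => A * ‖x - x₀‖ ^ 2 :=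
  contDiff_const.mul ((contDiff_id.sub contDiff_const).norm_sq ℝ)

variable [CompleteSpace E]

theorem gradient_fun_neg (φ : E → ℝ) (x : E) : ∇ (fun y => -φ y) x = -∇ φ x := by
  simp [gradient, fderiv_fun_neg]

theorem gradient_fun_add_const (φ : E → ℝ) (b : ℝ) (x : E) :
    ∇ (fun y => φ y + b) x = ∇ φ x := by
  simp [gradient]

theorem gradient_comp_sub_right (φ : E → ℝ) (k x : E) :
    ∇ (fun y => φ (y - k)) x = ∇ φ (x - k) := by
  simp [gradient, fderiv_comp_sub]

theorem continuous_gradient_of_contDiff {φ : E → ℝ} (hφ : ContDiff ℝ 1 φ) :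
    Continuous (∇ φ) :=
  (LinearIsometryEquiv.continuous _).comp (hφ.continuous_fderiv one_ne_zero)

theorem gradient_eq_of_isLocalMax_sub {f g : E → ℝ} {x : E} (hf : DifferentiableAt ℝ f x)
    (hg : DifferentiableAt ℝ g x) (h : IsLocalMax (fun y => f y - g y) x) : ∇ f x = ∇ g x := by
  have hfderiv := h.fderiv_eq_zero
  rw [fderiv_fun_sub hf hg, sub_eq_zero] at hfderiv
  simp only [gradient, hfderiv]

theorem hasGradientAt_const_mul_norm_sub_sq (A : ℝ) (x₀ x : E) :
    HasGradientAt (fun y => A * ‖y - x₀‖ ^ 2) ((2 * A) • (x - x₀)) x := by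
  rw [hasGradientAt_iff_hasFDerivAt]
  refine ((((hasFDerivAt_id x).sub_const x₀).norm_sq).const_mul A).congr_fderiv ?_
  ext v
  simp only [id_eq, smul_apply, ContinuousLinearMap.comp_id,
    innerSL_apply_apply, smul_eq_mul, InnerProductSpace.toDual_apply_apply, inner_smul_left,
    nsmul_eq_mul, conj_trivial]
  push_cast
  ring

theorem gradient_add_const_mul_norm_sub_sq {φ : E → ℝ} {x : E} (hφ : DifferentiableAt ℝ φ x)
    (A : ℝ) (x₀ : E) :
    ∇ (fun y => φ y + A * ‖y - x₀‖ ^ 2) x = ∇ φ x + (2 * A) • (x - x₀) := by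
  have hadd := hφ.hasGradientAt.hasFDerivAt.add
    (hasGradientAt_const_mul_norm_sub_sq A x₀ x).hasFDerivAt
  rw [← map_add] at hadd
  exact (hasGradientAt_iff_hasFDerivAt.2 hadd).gradient

theorem inner_gradient_norm_sub {x₀ y : E} (hy : y ≠ x₀) :
    inner ℝ (∇ (fun z => ‖z - x₀‖) y) (y - x₀) = ‖y - x₀‖ := by
  have hdiff : DifferentiableAt ℝ (fun v : E => ‖v‖) (y - x₀) :=
    differentiableAt_id.norm ℝ (sub_ne_zero.2 hy)
  rw [inner_gradient_left, fderiv_comp_sub, hdiff.fderiv_norm_self]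

theorem le_norm_gradient_const_mul_norm_sub (K : ℝ) {x₀ y : E} (hy : y ≠ x₀) :
    K ≤ ‖∇ (fun z => K * ‖z - x₀‖) y‖ := by
  have hpos : 0 < ‖y - x₀‖ := norm_pos_iff.2 (sub_ne_zero.2 hy)
  have hdiff : DifferentiableAt ℝ (fun z : E => ‖z - x₀‖) y :=
    (differentiableAt_id.sub_const x₀).norm ℝ (sub_ne_zero.2 hy)
  refine le_of_mul_le_mul_right ?_ hpos
  calc K * ‖y - x₀‖ = inner ℝ (∇ (fun z => K * ‖z - x₀‖) y) (y - x₀) := by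
        rw [inner_gradient_left, fderiv_const_mul hdiff, smul_apply,
          ← inner_gradient_left, inner_gradient_norm_sub hy, smul_eq_mul]
    _ ≤ ‖∇ (fun z => K * ‖z - x₀‖) y‖ * ‖y - x₀‖ := real_inner_le_norm _ _

end Gradient

section Viscosity

open scoped Gradient

variable {E : Type*} [NormedAddCommGroup E] [InnerProductSpace ℝ E] [CompleteSpace E]
  {H : E → E → ℝ} {a : ℝ} {w g : E → ℝ}

/-- `w` is a viscosity subsolution of the scalar equation `H(x, Dw) + a w = g(x)`. For a component
of a coupled system, `g` contains the other component. -/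
def IsSubsolution (H : E → E → ℝ) (a : ℝ) (w g : E → ℝ) : Prop :=
  ∀ φ : E → ℝ, ContDiff ℝ 1 φ → ∀ x₀ : E, IsLocalMax (fun x => w x - φ x) x₀ →
    H x₀ (∇ φ x₀) + a * w x₀ ≤ g x₀

/-- `w` is a viscosity supersolution of the scalar equation `H(x, Dw) + a w = g(x)`. -/
def IsSupersolution (H : E → E → ℝ) (a : ℝ) (w g : E → ℝ) : Prop :=
  ∀ φ : E → ℝ, ContDiff ℝ 1 φ → ∀ x₀ : E, IsLocalMin (fun x => w x - φ x) x₀ →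
    g x₀ ≤ H x₀ (∇ φ x₀) + a * w x₀

theorem isSupersolution_iff_isSubsolution_neg :
    IsSupersolution H a w g ↔
      IsSubsolution (fun x p => -H x (-p)) a (fun x => -w x) (fun x => -g x) := by
  constructor <;> intro h φ hφ x₀ hx₀
  · have hmin : IsLocalMin (fun x => w x - -φ x) x₀ :=
      hx₀.neg.congr (.of_forall fun x => by ring)
    have := h _ hφ.neg x₀ hmin
    rw [gradient_fun_neg] at this
    linarith
  · have hmax : IsLocalMax (fun x => -w x - -φ x) x₀ :=
      hx₀.neg.congr (.of_forall fun x => by ring)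
    have := h _ hφ.neg x₀ hmax
    simp only [gradient_fun_neg, neg_neg] at this
    linarith

theorem IsSubsolution.mono {g' : E → ℝ} (h : IsSubsolution H a w g) (hg : ∀ x, g x ≤ g' x) :
    IsSubsolution H a w g' :=
  fun φ hφ x₀ hx₀ => (h φ hφ x₀ hx₀).trans (hg x₀)

theorem isSubsolution_const {b : ℝ} (h : ∀ x, H x 0 + a * b ≤ g x) :
    IsSubsolution H a (fun _ => b) g := by
  intro φ hφ x₀ hx₀
  have hgrad : ∇ φ x₀ = 0 := by
    rw [← gradient_eq_of_isLocalMax_sub (differentiableAt_const b)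
      (hφ.differentiable one_ne_zero x₀) hx₀, gradient_fun_const]
  rw [hgrad]
  exact h x₀

theorem IsSubsolution.sub_const (h : IsSubsolution H a w g) (b s : ℝ) :
    IsSubsolution H b (fun x => w x - s) (fun x => g x + b * (w x - s) - a * w x) := by
  intro φ hφ x₀ hx₀
  have hmax : IsLocalMax (fun x => w x - φ x) x₀ := by
    filter_upwards [hx₀] with x hx
    linarith
  linarith [h φ hφ x₀ hmax]

theorem IsSupersolution.sub_const (h : IsSupersolution H a w g) (b s : ℝ) :
    IsSupersolution H b (fun x => w x - s) (fun x => g x + b * (w x - s) - a * w x) := by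
  intro φ hφ x₀ hx₀
  have hmin : IsLocalMin (fun x => w x - φ x) x₀ := by
    filter_upwards [hx₀] with x hx
    linarith
  linarith [h φ hφ x₀ hmin]

theorem IsSubsolution.comp_add_right {k : E} (hH : Function.Periodic H k)
    (h : IsSubsolution H a w g) :
    IsSubsolution H a (fun x => w (x + k)) (fun x => g (x + k)) := by
  intro φ hφ x₀ hx₀
  have htendsto : Tendsto (fun y => y - k) (𝓝 (x₀ + k)) (𝓝 x₀) := by
    simpa using (continuous_sub_right k).tendsto (x₀ + k)
  have hmax : IsLocalMax (fun y => w y - φ (y - k)) (x₀ + k) := by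
    filter_upwards [htendsto.eventually hx₀] with y hy
    simpa using hy
  have := h (fun y => φ (y - k)) (hφ.comp (contDiff_id.sub contDiff_const)) _ hmax
  rwa [gradient_comp_sub_right, add_sub_cancel_right, hH] at this

theorem IsSubsolution.piecewise_max {s : Set E} [∀ x, Decidable (x ∈ s)] {θ : E → ℝ}
    (h : IsSubsolution H a w g) (hs : IsOpen s) (hθ : ContDiff ℝ 1 θ)
    (hsub : ∀ y ∈ s, H y (∇ θ y) + a * θ y ≤ g y) :
    IsSubsolution H a (s.piecewise (fun x => max (w x) (θ x)) w) g := by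
  intro φ hφ y hy
  have hle : ∀ x, w x ≤ s.piecewise (fun x => max (w x) (θ x)) w x := fun x => by
    by_cases hx : x ∈ s <;> simp [hx]
  rcases (hle y).eq_or_lt with heq | hlt
  · rw [← heq]
    refine h φ hφ y ?_
    filter_upwards [hy] with x hx
    linarith [hle x]
  · have hys : y ∈ s := by
      by_contra hys
      simp [hys] at hlt
    have hwθ : w y < θ y := by simpa [hys] using hlt
    have heq : s.piecewise (fun x => max (w x) (θ x)) w y = θ y := by simp [hys, hwθ.le]
    have hmax : IsLocalMax (fun x => θ x - φ x) y := by
      filter_upwards [hy, hs.mem_nhds hys] with x hx hxs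
      have hθx : θ x ≤ s.piecewise (fun x => max (w x) (θ x)) w x := by simp [hxs]
      linarith
    rw [heq, ← gradient_eq_of_isLocalMax_sub (hθ.differentiable one_ne_zero y)
      (hφ.differentiable one_ne_zero y) hmax]
    exact hsub y hys

theorem eventually_strict_subsolution_add_const (hH : Continuous fun q : E × E => H q.1 q.2)
    (hg : Continuous g) {ψ : E → ℝ} (hψ : ContDiff ℝ 1 ψ) {x₀ : E} {b₀ : ℝ}
    (hlt : H x₀ (∇ ψ x₀) + a * (ψ x₀ + b₀) < g x₀) :
    ∀ᶠ q : ℝ × E in 𝓝 (b₀, x₀), H q.2 (∇ ψ q.2) + a * (ψ q.2 + q.1) < g q.2 := by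
  have hψc : Continuous ψ := hψ.continuous
  have hgrad : Continuous fun q : ℝ × E => (q.2, ∇ ψ q.2) :=
    continuous_snd.prodMk ((continuous_gradient_of_contDiff hψ).comp continuous_snd)
  have hlhs : Continuous fun q : ℝ × E => H q.2 (∇ ψ q.2) + a * (ψ q.2 + q.1) :=
    (hH.comp hgrad).add (by fun_prop)
  exact hlhs.continuousAt.eventually_lt (by fun_prop) hlt

-- `θ` is the test function bent down by a paraboloid and lifted by a small constant.
theorem exists_subsolution_crossing
    (hH : Continuous fun q : E × E => H q.1 q.2) (hg : Continuous g) {φ : E → ℝ}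
    (hφ : ContDiff ℝ 1 φ) {x₀ : E} {B : ℝ} (hmin : IsLocalMin (fun x => w x - φ x) x₀)
    (hlt : H x₀ (∇ φ x₀) + a * w x₀ < g x₀) (hB : w x₀ < B) :
    ∃ r > 0, ∃ θ : E → ℝ, ContDiff ℝ 1 θ ∧ w x₀ < θ x₀ ∧ (∀ y ∈ Metric.sphere x₀ r, θ y ≤ w y) ∧
      ∀ y ∈ Metric.ball x₀ r, H y (∇ θ y) + a * θ y ≤ g y ∧ θ y ≤ B := by
  let ψ : E → ℝ := fun y => φ y + (-1) * ‖y - x₀‖ ^ 2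
  let b₀ := w x₀ - φ x₀
  have hψ : ContDiff ℝ 1 ψ := hφ.add (contDiff_const_mul_norm_sub_sq (-1) x₀)
  have hgrad : ∇ ψ x₀ = ∇ φ x₀ := by
    rw [gradient_add_const_mul_norm_sub_sq (hφ.differentiable one_ne_zero x₀), sub_self,
      smul_zero, add_zero]
  have hψx₀ : ψ x₀ + b₀ = w x₀ := by simp [ψ, b₀]
  have hstrict := eventually_strict_subsolution_add_const (a := a) hH hg hψ (b₀ := b₀)
    (by rwa [hgrad, hψx₀])
  have hbelow : ∀ᶠ q : ℝ × E in 𝓝 (b₀, x₀), ψ q.2 + q.1 < B :=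
    have hψc : Continuous ψ := hψ.continuous
    ContinuousAt.eventually_lt (by fun_prop) continuousAt_const (hψx₀.trans_lt hB)
  obtain ⟨R, hR, hball⟩ := Metric.eventually_nhds_iff_ball.1
    ((hstrict.and hbelow).and (continuousAt_snd.eventually hmin))
  obtain ⟨r, hr, hrR⟩ := exists_between hR
  let δ := min r (r ^ 2)
  have hδ : 0 < δ := lt_min hr (by positivity)
  have hδR : δ < R := (min_le_left r (r ^ 2)).trans_lt hrR
  have hmem : ∀ y ∈ Metric.closedBall x₀ r, (b₀ + δ, y) ∈ Metric.ball (b₀, x₀) R := fun y hy => by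
    rw [← ball_prod_same]
    exact ⟨by simpa [abs_of_pos hδ] using hδR, Metric.closedBall_subset_ball hrR hy⟩
  refine ⟨r, hr, fun y => ψ y + (b₀ + δ), hψ.add contDiff_const, by linarith, fun y hy => ?_,
    fun y hy => ?_⟩
  · have hφy := (hball _ (hmem y (Metric.sphere_subset_closedBall hy))).2
    rw [mem_sphere_iff_norm] at hy
    simp only [ψ, b₀, hy]
    linarith [(min_le_right r (r ^ 2) : δ ≤ r ^ 2)]
  · obtain ⟨⟨hsub, hθB⟩, -⟩ := hball _ (hmem y (Metric.ball_subset_closedBall hy))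
    rw [gradient_fun_add_const]
    exact ⟨hsub.le, hθB.le⟩

theorem IsSubsolution.exists_larger_of_lt (hH : Continuous fun q : E × E => H q.1 q.2)
    (hg : Continuous g) (hw : Continuous w) (h : IsSubsolution H a w g) {φ : E → ℝ}
    (hφ : ContDiff ℝ 1 φ) {x₀ : E} {B : ℝ} (hmin : IsLocalMin (fun x => w x - φ x) x₀)
    (hlt : H x₀ (∇ φ x₀) + a * w x₀ < g x₀) (hB : w x₀ < B) (hwB : ∀ x, w x ≤ B) :
    ∃ U : E → ℝ, Continuous U ∧ IsSubsolution H a U g ∧ (∀ x, w x ≤ U x) ∧ (∀ x, U x ≤ B) ∧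
      w x₀ < U x₀ := by
  classical
  obtain ⟨r, hr, θ, hθ, hθx₀, hsphere, hball⟩ :=
    exists_subsolution_crossing hH hg hφ hmin hlt hB
  refine ⟨(Metric.ball x₀ r).piecewise (fun x => max (w x) (θ x)) w, ?_,
    h.piecewise_max Metric.isOpen_ball hθ fun y hy => (hball y hy).1, fun x => ?_, fun x => ?_, ?_⟩
  · refine (hw.max hθ.continuous).piecewise (fun x hx => ?_) hw
    exact max_eq_left (hsphere x (Metric.frontier_ball_subset_sphere hx))
  · by_cases hx : x ∈ Metric.ball x₀ r
    · rw [piecewise_eq_of_mem _ _ _ hx]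
      exact le_max_left _ _
    · rw [piecewise_eq_of_notMem _ _ _ hx]
  · by_cases hx : x ∈ Metric.ball x₀ r
    · rw [piecewise_eq_of_mem _ _ _ hx]
      exact max_le (hwB x) (hball x hx).2
    · rw [piecewise_eq_of_notMem _ _ _ hx]
      exact hwB x
  · rw [piecewise_eq_of_mem _ _ _ (Metric.mem_ball_self hr)]
    exact hθx₀.trans_le (le_max_right _ _)

end Viscosity

section ContactPoints

open scoped Gradient

theorem exists_isMaxOn_sub_mul_norm {E : Type*} [SeminormedAddCommGroup E] [ProperSpace E]
    {w : E → ℝ} (hw : Continuous w) {B K R₀ : ℝ} (hB : ∀ x, w x ≤ B) (hK : 0 < K) (x₀ : E) :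
    ∃ R ≥ R₀, ∃ y ∈ Metric.ball x₀ R,
      IsMaxOn (fun x => w x - K * ‖x - x₀‖) (Metric.closedBall x₀ R) y := by
  let R := max R₀ ((B - w x₀ + 1) / K)
  have hR : B - w x₀ + 1 ≤ K * R := by
    rw [mul_comm, ← div_le_iff₀ hK]
    exact le_max_right _ _
  have hR_pos : 0 < R := pos_of_mul_pos_right (by linarith [hB x₀]) hK.le
  obtain ⟨y, hy, hmax⟩ := (isCompact_closedBall x₀ R).exists_isMaxOn_mem_subset
    (f := fun x => w x - K * ‖x - x₀‖) (s := Metric.ball x₀ R) (by fun_prop)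
    (Metric.mem_closedBall_self hR_pos.le) fun y hy => by
      have hyR : ‖y - x₀‖ = R := by rwa [Metric.closedBall_sdiff_ball, mem_sphere_iff_norm] at hy
      simp only [sub_self, norm_zero, hyR]
      linarith [hB y]
  exact ⟨R, le_max_left _ _, y, hy, hmax⟩

variable {E : Type*} [NormedAddCommGroup E] [InnerProductSpace ℝ E]

/-- The points at which some `C¹` function touches `w` from above; these are the only points where
a subsolution property of `w` says anything. -/
def upperContactSet (w : E → ℝ) : Set E :=
  {y | ∃ φ : E → ℝ, ContDiff ℝ 1 φ ∧ IsLocalMax (fun x => w x - φ x) y}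

variable [ProperSpace E] {w : E → ℝ}

theorem dense_upperContactSet (hw : Continuous w) : Dense (upperContactSet w) := by
  refine Metric.dense_iff.2 fun x₀ r hr => ?_
  obtain ⟨M, hM⟩ := (isCompact_closedBall x₀ r).bddAbove_image hw.continuousOn
  let A := (M - w x₀ + 1) / r ^ 2
  have hA : A * r ^ 2 = M - w x₀ + 1 := by simp only [A]; field_simp
  obtain ⟨y, hy, hmax⟩ := (isCompact_closedBall x₀ r).exists_isLocalMax_mem_open
    (f := fun x => w x - A * ‖x - x₀‖ ^ 2) Metric.ball_subset_closedBall (by fun_prop)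
    (Metric.mem_closedBall_self hr.le) (fun y hy => by
      have hyr : ‖y - x₀‖ = r := by rwa [Metric.closedBall_sdiff_ball, mem_sphere_iff_norm] at hy
      have hyM : w y ≤ M := hM (mem_image_of_mem w hy.1)
      simp only [sub_self, norm_zero, hyr]
      linarith) Metric.isOpen_ball
  exact ⟨y, hy, _, contDiff_const_mul_norm_sub_sq A x₀, hmax⟩

-- A cone of slope `K` centred at `x₀` can only touch `w` from above at its vertex.
theorem lipschitzWith_of_norm_gradient_lt (hw : Continuous w) {B : ℝ} (hB : ∀ x, w x ≤ B)
    {K : NNReal} (h : ∀ φ : E → ℝ, ContDiff ℝ 1 φ → ∀ y, IsLocalMax (fun x => w x - φ x) y →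
      ‖∇ φ y‖ < K) :
    LipschitzWith K w := by
  have hK : 0 < (K : ℝ) := by
    obtain ⟨y, φ, hφ, hy⟩ := (dense_upperContactSet hw).nonempty
    exact (norm_nonneg _).trans_lt (h φ hφ y hy)
  refine LipschitzWith.of_le_add_mul K fun z x₀ => ?_
  obtain ⟨R, hR, y, hy, hmax⟩ := exists_isMaxOn_sub_mul_norm (R₀ := dist z x₀) hw hB hK x₀
  have hyx₀ : y = x₀ := by
    by_contra hne
    have hcone : ContDiffAt ℝ (1 : ℕ) (fun x => (K : ℝ) * ‖x - x₀‖) y :=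
      contDiffAt_const.mul ((contDiffAt_id.sub contDiffAt_const).norm ℝ (sub_ne_zero.2 hne))
    obtain ⟨φ, hφ, heq⟩ := exists_contDiff_eventuallyEq hcone
    have hlocal : IsLocalMax (fun x => w x - φ x) y :=
      (hmax.isLocalMax (Metric.closedBall_mem_nhds_of_mem hy)).congr
        (heq.mono fun x hx => by simp only [hx])
    have hlt := h φ (by exact_mod_cast hφ) y hlocal
    rw [heq.gradient_eq] at hlt
    exact hlt.not_ge (le_norm_gradient_const_mul_norm_sub K hne)
  have hz := hmax (Metric.mem_closedBall.2 hR)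
  simp only [hyx₀, sub_self, norm_zero, mem_ofPred_eq] at hz
  rw [dist_eq_norm]
  linarith

end ContactPoints

section Stability

open scoped Gradient

theorem exists_isLocalMax_perturbed {E : Type*} [SeminormedAddCommGroup E] [ProperSpace E]
    {w w' φ : E → ℝ} {x₀ : E} {r ε A : ℝ} (hr : 0 < r) (hA : 0 ≤ A) (hε : 2 * ε < A * r ^ 2)
    (hφ : Continuous φ) (hw' : Continuous w')
    (hmax : ∀ x ∈ Metric.closedBall x₀ r, w x - φ x ≤ w x₀ - φ x₀)
    (hle : ∀ x ∈ Metric.closedBall x₀ r, w' x ≤ w x + ε) (hge : w x₀ - ε ≤ w' x₀) :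
    ∃ y ∈ Metric.ball x₀ r, IsLocalMax (fun x => w' x - (φ x + A * ‖x - x₀‖ ^ 2)) y ∧
      w y - ε ≤ w' y := by
  have hx₀ := Metric.mem_closedBall_self (x := x₀) hr.le
  obtain ⟨y, hy, hymax⟩ := (isCompact_closedBall x₀ r).exists_isMaxOn_mem_subset
    (f := fun x => w' x - (φ x + A * ‖x - x₀‖ ^ 2)) (s := Metric.ball x₀ r) (by fun_prop) hx₀
    fun y hy => by
      have hyr : ‖y - x₀‖ = r := by rwa [Metric.closedBall_sdiff_ball, mem_sphere_iff_norm] at hy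
      simp only [sub_self, norm_zero, hyr]
      linarith [hmax y hy.1, hle y hy.1]
  refine ⟨y, hy, hymax.isLocalMax (Metric.closedBall_mem_nhds_of_mem hy), ?_⟩
  have hyx₀ := hymax hx₀
  simp only [sub_self, norm_zero, zero_pow two_ne_zero, mul_zero, add_zero, mem_ofPred_eq] at hyx₀
  linarith [hmax y (Metric.ball_subset_closedBall hy), mul_nonneg hA (sq_nonneg ‖y - x₀‖)]

variable {E : Type*} [NormedAddCommGroup E] [InnerProductSpace ℝ E] [ProperSpace E]

theorem IsSubsolution.of_approx {H : E → E → ℝ} (hH : Continuous fun q : E × E => H q.1 q.2)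
    {a : ℝ} (ha : 0 ≤ a) {w g : E → ℝ} (hw : Continuous w) (hg : Continuous g)
    (h : ∀ x₀, ∀ ε > 0, ∃ w' g' : E → ℝ, Continuous w' ∧ IsSubsolution H a w' g' ∧
      (∀ y ∈ Metric.closedBall x₀ 1, w' y ≤ w y + ε ∧ g' y ≤ g y + ε) ∧ w x₀ - ε ≤ w' x₀) :
    IsSubsolution H a w g := by
  intro φ hφ x₀ hx₀
  by_contra! hlt
  have hgrad : Continuous fun q : ℝ × E => (q.2, ∇ φ q.2 + (2 * (1 : ℝ)) • (q.2 - x₀)) :=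
    continuous_snd.prodMk (((continuous_gradient_of_contDiff hφ).comp continuous_snd).add
      (by fun_prop))
  have hlhs : Continuous fun q : ℝ × E =>
      H q.2 (∇ φ q.2 + (2 * (1 : ℝ)) • (q.2 - x₀)) + a * (w q.2 - q.1) :=
    (hH.comp hgrad).add (by fun_prop)
  have hstrict : ∀ᶠ q : ℝ × E in 𝓝 (0, x₀),
      g q.2 + q.1 < H q.2 (∇ φ q.2 + (2 * (1 : ℝ)) • (q.2 - x₀)) + a * (w q.2 - q.1) :=
    ContinuousAt.eventually_lt (by fun_prop) hlhs.continuousAt (by simpa using hlt)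
  obtain ⟨R, hR, hball⟩ := Metric.eventually_nhds_iff_ball.1
    (hstrict.and (continuousAt_snd.eventually hx₀))
  obtain ⟨r, hr, hrR⟩ := exists_between (lt_min hR one_pos)
  rw [lt_min_iff] at hrR
  let ε := r ^ 2 / 4
  have hε : 0 < ε := by positivity
  have hεr : 4 * ε = r ^ 2 := mul_div_cancel₀ _ four_ne_zero
  have hεR : ε < R := by nlinarith
  have hmem : ∀ y ∈ Metric.closedBall x₀ r, (ε, y) ∈ Metric.ball (0, x₀) R := fun y hy => by
    rw [← ball_prod_same]
    exact ⟨by simpa [abs_of_pos hε] using hεR, Metric.closedBall_subset_ball hrR.1 hy⟩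
  obtain ⟨w', g', hw', hsub, hle, hge⟩ := h x₀ ε hε
  have hle' := fun y hy => hle y (Metric.closedBall_subset_closedBall hrR.2.le hy)
  obtain ⟨y, hy, hymax, hyw'⟩ := exists_isLocalMax_perturbed (A := 1) hr zero_le_one (by linarith)
    hφ.continuous hw' (fun x hx => (hball _ (hmem x hx)).2) (fun x hx => (hle' x hx).1) hge
  have hy' := Metric.ball_subset_closedBall hy
  have hysub := hsub _ (hφ.add (contDiff_const_mul_norm_sub_sq 1 x₀)) y hymax
  rw [gradient_add_const_mul_norm_sub_sq (hφ.differentiable one_ne_zero y)] at hysub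
  linarith [(hball _ (hmem y hy')).1, (hle' y hy').2, mul_le_mul_of_nonneg_left hyw' ha]

theorem equicontinuous_comp {X Y Z ι : Type*} [TopologicalSpace X] [UniformSpace Y]
    [UniformSpace Z] {f : Y → Z} (hf : UniformContinuous f) {F : ι → X → Y}
    (hF : Equicontinuous F) : Equicontinuous fun k x => f (F k x) :=
  fun x₀ _ hU => hF x₀ _ (hf hU)

theorem tendstoUniformlyOn_of_equicontinuous {X Y ι : Type*} [TopologicalSpace X]
    [UniformSpace Y] {F : ι → X → Y} {f : X → Y} {p : Filter ι} (hF : Equicontinuous F)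
    (h : Tendsto F p (𝓝 f)) {s : Set X} (hs : IsCompact s) : TendstoUniformlyOn F f p s := by
  have huniform := (EquicontinuousOn.tendsto_uniformOnFun_iff_pi (𝔖 := {t | IsCompact t})
    (fun _ => id) (sUnion_eq_univ_iff.2 fun x => ⟨{x}, isCompact_singleton, rfl⟩)
    (fun t _ => hF.equicontinuousOn t) p f).2 h
  exact UniformOnFun.tendsto_iff_tendstoUniformlyOn.1 huniform s hs

variable {H : E → E → ℝ} {a : ℝ} {ι : Type*} {p : Filter ι} [p.NeBot] {F G : ι → E → ℝ}
  {w g : E → ℝ}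

theorem IsSubsolution.of_tendsto (hH : Continuous fun q : E × E => H q.1 q.2) (ha : 0 ≤ a)
    (hF : Equicontinuous F) (hG : Equicontinuous G) (hFw : Tendsto F p (𝓝 w))
    (hGg : Tendsto G p (𝓝 g)) (h : ∀ k, IsSubsolution H a (F k) (G k)) :
    IsSubsolution H a w g := by
  refine .of_approx hH ha (hFw.continuous_of_equicontinuous hF)
    (hGg.continuous_of_equicontinuous hG) fun x₀ ε hε => ?_
  have hcompact := isCompact_closedBall x₀ (1 : ℝ)
  obtain ⟨k, hFk, hGk⟩ :=
    ((Metric.tendstoUniformlyOn_iff.1 (tendstoUniformlyOn_of_equicontinuous hF hFw hcompact) ε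
      hε).and (Metric.tendstoUniformlyOn_iff.1
      (tendstoUniformlyOn_of_equicontinuous hG hGg hcompact) ε hε)).exists
  simp only [Real.dist_eq, abs_lt] at hFk hGk
  refine ⟨F k, G k, hF.continuous k, h k, fun y hy => ?_, ?_⟩
  · constructor <;> linarith [hFk y hy, hGk y hy]
  · linarith [hFk x₀ (Metric.mem_closedBall_self zero_le_one)]

theorem IsSupersolution.of_tendsto (hH : Continuous fun q : E × E => H q.1 q.2) (ha : 0 ≤ a)
    (hF : Equicontinuous F) (hG : Equicontinuous G) (hFw : Tendsto F p (𝓝 w))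
    (hGg : Tendsto G p (𝓝 g)) (h : ∀ k, IsSupersolution H a (F k) (G k)) :
    IsSupersolution H a w g := by
  rw [isSupersolution_iff_isSubsolution_neg]
  refine .of_tendsto (hH.comp (continuous_fst.prodMk continuous_snd.neg)).neg ha
    (equicontinuous_comp uniformContinuous_neg hF) (equicontinuous_comp uniformContinuous_neg hG)
    hFw.neg hGg.neg fun k => isSupersolution_iff_isSubsolution_neg.1 (h k)

end Stability

section Perron

variable {E : Type*} [NormedAddCommGroup E] [InnerProductSpace ℝ E] [CompleteSpace E]

/-- `w` is a continuous viscosity subsolution, bounded by `B`, of the discounted system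
`l wᵢ + Hᵢ(x, Dwᵢ) + cᵢ (wᵢ - wⱼ) = 0`. The two components are indexed by `Bool`, so that `j = !i`;
the coupling term `cᵢ wⱼ` is kept on the right-hand side. -/
structure IsDiscountedSub (H : Bool → E → E → ℝ) (c : Bool → ℝ) (l B : ℝ)
    (w : Bool → E → ℝ) : Prop where
  continuous : ∀ i, Continuous (w i)
  abs_le : ∀ i x, |w i x| ≤ B
  isSubsolution : ∀ i, IsSubsolution (H i) (l + c i) (w i) fun x => c i * w (!i) x

variable {H : Bool → E → E → ℝ} {c : Bool → ℝ} {l B : ℝ} {w : Bool → E → ℝ}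

theorem isDiscountedSub_const (hB : 0 ≤ B) (hH₀ : ∀ i x, H i x 0 ≤ l * B) :
    IsDiscountedSub H c l B fun _ _ => -B where
  continuous _ := continuous_const
  abs_le _ _ := by rw [abs_neg, abs_of_nonneg hB]
  isSubsolution i := isSubsolution_const fun x => by linarith [hH₀ i x]

namespace IsDiscountedSub

theorem comp_add_right (h : IsDiscountedSub H c l B w) {k : E}
    (hk : ∀ i, Function.Periodic (H i) k) : IsDiscountedSub H c l B fun i x => w i (x + k) where
  continuous i := (h.continuous i).comp (continuous_add_const k)
  abs_le i x := h.abs_le i (x + k)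
  isSubsolution i := (h.isSubsolution i).comp_add_right (hk i)

theorem update (h : IsDiscountedSub H c l B w) {i : Bool} (hc : 0 ≤ c (!i))
    {U : E → ℝ} (hU : Continuous U) (hwU : ∀ x, w i x ≤ U x) (hUB : ∀ x, U x ≤ B)
    (hsub : IsSubsolution (H i) (l + c i) U fun x => c i * w (!i) x) :
    IsDiscountedSub H c l B (Function.update w i U) := by
  have hi : Function.update w i U i = U := Function.update_self ..
  have hj : Function.update w i U (!i) = w (!i) := Function.update_of_ne (by simp) ..
  have hcases : ∀ j, j = i ∨ j = !i := fun j => by cases i <;> cases j <;> simp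
  constructor <;> intro j <;> rcases hcases j with rfl | rfl
  · rwa [hi]
  · rw [hj]
    exact h.continuous _
  · intro x
    rw [hi]
    exact _root_.abs_le.2 ⟨(_root_.abs_le.1 (h.abs_le j x)).1.trans (hwU x), hUB x⟩
  · rw [hj]
    exact h.abs_le _
  · rwa [hi, hj]
  · rw [Bool.not_not, hi, hj]
    refine (h.isSubsolution (!i)).mono fun x => mul_le_mul_of_nonneg_left ?_ hc
    rw [Bool.not_not]
    exact hwU x

end IsDiscountedSub

/-- The pointwise supremum of all bounded subsolutions of the discounted system, the candidate
solution of Perron's method. -/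
noncomputable def perronSup (H : Bool → E → E → ℝ) (c : Bool → ℝ) (l B : ℝ)
    (i : Bool) (x : E) : ℝ :=
  ⨆ w : {w // IsDiscountedSub H c l B w}, w.1 i x

theorem IsDiscountedSub.le_perronSup (h : IsDiscountedSub H c l B w) (i : Bool)
    (x : E) : w i x ≤ perronSup H c l B i x :=
  le_ciSup (f := fun w : {w // IsDiscountedSub H c l B w} => w.1 i x)
    ⟨B, forall_mem_range.2 fun w => le_of_abs_le (w.2.abs_le i x)⟩ ⟨w, h⟩

theorem perronSup_le (h : IsDiscountedSub H c l B w) {i : Bool} {x : E} {b : ℝ}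
    (hb : ∀ w, IsDiscountedSub H c l B w → w i x ≤ b) : perronSup H c l B i x ≤ b :=
  haveI : Nonempty {w // IsDiscountedSub H c l B w} := ⟨⟨w, h⟩⟩
  ciSup_le fun w => hb w.1 w.2

theorem periodic_perronSup (h : IsDiscountedSub H c l B w) {k : E}
    (hk : ∀ i, Function.Periodic (H i) k) (i : Bool) :
    Function.Periodic (perronSup H c l B i) k := by
  refine fun x => le_antisymm (perronSup_le h fun w hw => ?_) (perronSup_le h fun w hw => ?_)
  · exact (hw.comp_add_right hk).le_perronSup i x
  · simpa using (hw.comp_add_right fun i => (hk i).neg).le_perronSup i (x + k)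

end Perron

section PerronSolution

open scoped Gradient

variable {E : Type*} [NormedAddCommGroup E] [InnerProductSpace ℝ E] [ProperSpace E]
  {H : Bool → E → E → ℝ} {c : Bool → ℝ} {l B D : ℝ} {K : NNReal} {w : Bool → E → ℝ}

namespace IsDiscountedSub

theorem sub_le (h : IsDiscountedSub H c l B w) (hc : ∀ i, 0 < c i) (hl : 0 ≤ l)
    (hD : ∀ i x p, l * B ≤ H i x p + c i * D) (i : Bool) (x : E) : w i x - w (!i) x ≤ D := by
  have hclosed : IsClosed {x | w i x - w (!i) x ≤ D} :=
    isClosed_le ((h.continuous i).sub (h.continuous (!i))) continuous_const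
  refine (dense_upperContactSet (h.continuous i)).induction (fun y ⟨φ, hφ, hy⟩ => ?_) hclosed x
  have hsub := h.isSubsolution i φ hφ y hy
  have hlw := mul_le_mul_of_nonneg_left (neg_le_of_abs_le (h.abs_le i y)) hl
  refine le_of_mul_le_mul_left ?_ (hc i)
  linarith [hD i y (∇ φ y)]

theorem lipschitzWith (h : IsDiscountedSub H c l B w) (hc : ∀ i, 0 < c i) (hl : 0 ≤ l)
    (hD : ∀ i x p, l * B ≤ H i x p + c i * D)
    (hK : ∀ i x p, K ≤ ‖p‖ → l * B + c i * D < H i x p) (i : Bool) : LipschitzWith K (w i) := by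
  refine lipschitzWith_of_norm_gradient_lt (h.continuous i)
    (fun x => le_of_abs_le (h.abs_le i x)) fun φ hφ y hy => ?_
  by_contra! hge
  have hsub := h.isSubsolution i φ hφ y hy
  have hlw := mul_le_mul_of_nonneg_left (neg_le_of_abs_le (h.abs_le i y)) hl
  have hdiff := h.sub_le hc hl hD (!i) y
  rw [Bool.not_not] at hdiff
  linarith [hK i y _ hge, mul_le_mul_of_nonneg_left hdiff (hc i).le]

end IsDiscountedSub

theorem lipschitzWith_perronSup (h : IsDiscountedSub H c l B w) (hc : ∀ i, 0 < c i) (hl : 0 ≤ l)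
    (hD : ∀ i x p, l * B ≤ H i x p + c i * D)
    (hK : ∀ i x p, K ≤ ‖p‖ → l * B + c i * D < H i x p) (i : Bool) :
    LipschitzWith K (perronSup H c l B i) :=
  LipschitzWith.of_le_add_mul K fun x y => perronSup_le h fun _ hw =>
    ((hw.lipschitzWith hc hl hD hK i).le_add_mul x y).trans
      (add_le_add_left (hw.le_perronSup i y) _)

theorem isDiscountedSub_perronSup (hH : ∀ i, Continuous fun q : E × E => H i q.1 q.2)
    (h : IsDiscountedSub H c l B w) (hc : ∀ i, 0 ≤ c i) (hl : 0 ≤ l)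
    (hcont : ∀ i, Continuous (perronSup H c l B i)) :
    IsDiscountedSub H c l B (perronSup H c l B) where
  continuous := hcont
  abs_le i x := abs_le.2
    ⟨(neg_le_of_abs_le (h.abs_le i x)).trans (h.le_perronSup i x),
      perronSup_le h fun _ hw => le_of_abs_le (hw.abs_le i x)⟩
  isSubsolution i := by
    refine .of_approx (hH i) (add_nonneg hl (hc i)) (hcont i)
      (continuous_const.mul (hcont (!i))) fun x₀ ε hε => ?_
    have : Nonempty {w // IsDiscountedSub H c l B w} := ⟨⟨w, h⟩⟩
    obtain ⟨⟨w', hw'⟩, hlt⟩ := exists_lt_of_lt_ciSup (sub_lt_self (perronSup H c l B i x₀) hε)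
    refine ⟨w' i, _, hw'.continuous i, hw'.isSubsolution i, fun y _ => ⟨?_, ?_⟩, hlt.le⟩
    · linarith [hw'.le_perronSup i y]
    · linarith [mul_le_mul_of_nonneg_left (hw'.le_perronSup (!i) y) (hc i)]

theorem isSupersolution_perronSup (hH : ∀ i, Continuous fun q : E × E => H i q.1 q.2)
    (h : IsDiscountedSub H c l B (perronSup H c l B)) (hc : ∀ i, 0 ≤ c i)
    (hH₀ : ∀ i x, -(l * B) ≤ H i x 0) (i : Bool) :
    IsSupersolution (H i) (l + c i) (perronSup H c l B i)
      fun x => c i * perronSup H c l B (!i) x := by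
  intro φ hφ x₀ hmin
  have hle : ∀ i x, perronSup H c l B i x ≤ B := fun i x => le_of_abs_le (h.abs_le i x)
  rcases (hle i x₀).eq_or_lt with heq | hlt
  · have hφmax : IsLocalMax φ x₀ := by
      filter_upwards [hmin] with x hx
      linarith [hle i x]
    have hgrad : ∇ φ x₀ = 0 := by rw [gradient, hφmax.fderiv_eq_zero, map_zero]
    rw [hgrad, heq]
    linarith [hH₀ i x₀, mul_le_mul_of_nonneg_left (hle (!i) x₀) (hc i)]
  · by_contra! hstrict
    obtain ⟨U, hU, hUsub, hleU, hUB, hltU⟩ := (h.isSubsolution i).exists_larger_of_lt (hH i)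
      (continuous_const.mul (h.continuous (!i))) (h.continuous i) hφ hmin hstrict hlt (hle i)
    have hUle := (h.update (hc (!i)) hU hleU hUB hUsub).le_perronSup i x₀
    rw [Function.update_self] at hUle
    exact hUle.not_gt hltU

theorem exists_discounted_solution (hH : ∀ i, Continuous fun q : E × E => H i q.1 q.2)
    (hc : ∀ i, 0 < c i) (hl : 0 ≤ l) (hB : 0 ≤ B) (hH₀ : ∀ i x, |H i x 0| ≤ l * B)
    (hD : ∀ i x p, l * B ≤ H i x p + c i * D)
    (hK : ∀ i x p, K ≤ ‖p‖ → l * B + c i * D < H i x p) :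
    ∃ u : Bool → E → ℝ, (∀ i, LipschitzWith K (u i)) ∧ (∀ i x, |u i x| ≤ B) ∧
      (∀ i x, u i x - u (!i) x ≤ D) ∧
      (∀ i, IsSubsolution (H i) (l + c i) (u i) fun x => c i * u (!i) x) ∧
      (∀ i, IsSupersolution (H i) (l + c i) (u i) fun x => c i * u (!i) x) ∧
      ∀ k, (∀ i, Function.Periodic (H i) k) → ∀ i, Function.Periodic (u i) k := by
  have hconst := isDiscountedSub_const (c := c) hB fun i x => le_of_abs_le (hH₀ i x)
  have hlip := lipschitzWith_perronSup hconst hc hl hD hK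
  have hsub := isDiscountedSub_perronSup hH hconst (fun i => (hc i).le) hl
    fun i => (hlip i).continuous
  have hsuper := isSupersolution_perronSup hH hsub (fun i => (hc i).le)
    fun i x => neg_le_of_abs_le (hH₀ i x)
  exact ⟨perronSup H c l B, hlip, hsub.abs_le, hsub.sub_le hc hl hD, hsub.isSubsolution, hsuper,
    fun k hk => periodic_perronSup hconst hk⟩

end PerronSolution

section VanishingDiscount

theorem exists_tendsto_of_abs_le {ι X : Type*} (p : Ultrafilter ι) {F : ι → X → ℝ} {b : X → ℝ}
    (h : ∀ k x, |F k x| ≤ b x) : ∃ f, Tendsto F p (𝓝 f) := by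
  have hcompact : IsCompact (univ.pi fun x => Icc (-b x) (b x)) :=
    isCompact_univ_pi fun _ => isCompact_Icc
  obtain ⟨f, -, hf⟩ := hcompact.ultrafilter_le_nhds' (p.map F)
    (Ultrafilter.mem_map.2 (mem_of_superset univ_mem fun k _ x _ => abs_le.1 (h k x)))
  exact ⟨f, hf⟩

theorem exists_tendsto_sub_of_lipschitzWith {ι X : Type*} [PseudoMetricSpace X]
    (p : Ultrafilter ι) {u : ι → Bool → X → ℝ} {K : NNReal} {D : ℝ}
    (hlip : ∀ k i, LipschitzWith K (u k i)) (hD : ∀ k i x, u k i x - u k (!i) x ≤ D) (j : Bool)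
    (x₀ : X) :
    ∃ v : Bool → X → ℝ, ∀ i, Tendsto (fun k x => u k i x - u k j x₀) p (𝓝 (v i)) := by
  have hbound : ∀ i k x, |u k i x - u k j x₀| ≤ K * dist x x₀ + D := by
    intro i k x
    have hx : |u k i x - u k i x₀| ≤ K * dist x x₀ := (hlip k i).dist_le_mul x x₀
    have hij : |u k i x₀ - u k j x₀| ≤ D := by
      have htrue := hD k true x₀
      have hfalse := hD k false x₀
      rw [Bool.not_true] at htrue
      rw [Bool.not_false] at hfalse
      rw [abs_le]
      cases i <;> cases j <;> constructor <;> linarith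
    linarith [abs_sub_le (u k i x) (u k i x₀) (u k j x₀)]
  choose v hv using fun i => exists_tendsto_of_abs_le p (hbound i)
  exact ⟨v, hv⟩

variable {E : Type*} [NormedAddCommGroup E] [InnerProductSpace ℝ E] [ProperSpace E]
  {H : Bool → E → E → ℝ} {c : Bool → ℝ} {ι : Type*} {p : Ultrafilter ι} {l : ι → ℝ}
  {u : ι → Bool → E → ℝ} {K : NNReal} {C D : ℝ}

theorem exists_cell_solution_of_discounted
    (hH : ∀ i, Continuous fun q : E × E => H i q.1 q.2) (hc : ∀ i, 0 ≤ c i)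
    (hl : Tendsto l p (𝓝 0)) (hl_le : ∀ k, |l k| ≤ 1)
    (hlip : ∀ k i, LipschitzWith K (u k i)) (hC : ∀ k i x, |l k * u k i x| ≤ C)
    (hD : ∀ k i x, u k i x - u k (!i) x ≤ D)
    (hsub : ∀ k i, IsSubsolution (H i) (l k + c i) (u k i) fun x => c i * u k (!i) x)
    (hsuper : ∀ k i, IsSupersolution (H i) (l k + c i) (u k i) fun x => c i * u k (!i) x) :
    ∃ (v : Bool → E → ℝ) (h : ℝ), (∀ i, LipschitzWith K (v i)) ∧
      (∀ i, IsSubsolution (H i) (c i) (v i) fun x => h + c i * v (!i) x) ∧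
      (∀ i, IsSupersolution (H i) (c i) (v i) fun x => h + c i * v (!i) x) ∧
      ∀ T, (∀ k i, Function.Periodic (u k i) T) → ∀ i, Function.Periodic (v i) T := by
  obtain ⟨v, hv⟩ := exists_tendsto_sub_of_lipschitzWith p hlip hD true 0
  obtain ⟨h, hh⟩ := exists_tendsto_of_abs_le p fun k (_ : Unit) => hC k true 0
  let F : Bool → ι → E → ℝ := fun i k x => u k i x - u k true 0
  let G : Bool → ι → E → ℝ := fun i k x =>
    c i * u k (!i) x + c i * (u k i x - u k true 0) - (l k + c i) * u k i x
  have hFlip : ∀ i k, LipschitzWith K (F i k) := fun i k =>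
    LipschitzWith.of_le_add_mul K fun x y => by linarith [(hlip k i).le_add_mul x y]
  have hG : ∀ i k x, G i k x = c i * F (!i) k x - l k * F i k x - l k * u k true 0 :=
    fun i k x => by simp only [G, F]; ring
  have hGlim : ∀ i, Tendsto (G i) p (𝓝 fun x => -h () + c i * v (!i) x) := fun i =>
    tendsto_pi_nhds.2 fun x => by
      have hlim := (((tendsto_pi_nhds.1 (hv (!i)) x).const_mul (c i)).sub
        (hl.mul (tendsto_pi_nhds.1 (hv i) x))).sub (tendsto_pi_nhds.1 hh ())
      rw [zero_mul, sub_zero, sub_eq_neg_add] at hlim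
      exact hlim.congr fun k => (hG i k x).symm
  have hGlip : ∀ i k, LipschitzWith (‖c i‖₊ * K + 1 * K) (G i k) := fun i k => by
    have hlk := (lipschitzWith_smul (β := ℝ) (l k)).weaken (K' := 1) (by exact_mod_cast hl_le k)
    rw [funext (hG i k), ← add_zero (_ + _)]
    exact (((lipschitzWith_smul (c i)).comp (hFlip (!i) k)).sub (hlk.comp (hFlip i k))).sub
      (.const _)
  have hFequi := fun i => (LipschitzWith.uniformEquicontinuous (F i) K (hFlip i)).equicontinuous
  have hGequi := fun i => (LipschitzWith.uniformEquicontinuous (G i) _ (hGlip i)).equicontinuous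
  refine ⟨v, -h (), fun i => ?_, fun i => ?_, fun i => ?_, fun T hT i x => ?_⟩
  · exact (isClosed_setOfPred_lipschitzWith K).mem_of_tendsto (hv i) (.of_forall (hFlip i))
  · exact .of_tendsto (hH i) (hc i) (hFequi i) (hGequi i) (hv i) (hGlim i)
      fun k => (hsub k i).sub_const (c i) (u k true 0)
  · exact .of_tendsto (hH i) (hc i) (hFequi i) (hGequi i) (hv i) (hGlim i)
      fun k => (hsuper k i).sub_const (c i) (u k true 0)
  · refine tendsto_nhds_unique (tendsto_pi_nhds.1 (hv i) (x + T)) ?_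
    simpa only [hT _ i x] using tendsto_pi_nhds.1 (hv i) x

end VanishingDiscount

section PeriodicHamiltonian

variable {n : ℕ}

theorem exists_norm_add_intVec_le (x : En n) : ∃ k, ‖x + intVec n k‖ ≤ √n := by
  refine ⟨fun i => -⌊x i⌋, ?_⟩
  rw [EuclideanSpace.norm_eq]
  refine Real.sqrt_le_sqrt ?_
  have hcoord : ∀ i, ‖(x + intVec n fun i => -⌊x i⌋) i‖ ^ 2 ≤ 1 := by
    intro i
    have hfract : (x + intVec n fun i => -⌊x i⌋) i = Int.fract (x i) := by
      simp [intVec, Int.fract, sub_eq_add_neg]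
    rw [hfract, Real.norm_eq_abs, sq_le_one_iff_abs_le_one, abs_abs, Int.abs_fract]
    exact (Int.fract_lt_one _).le
  simpa using Finset.sum_le_card_nsmul Finset.univ _ 1 fun i _ => hcoord i

theorem ZPeriodicH.periodic {H : En n → En n → ℝ} (h : ZPeriodicH H) (k : Fin n → ℤ) :
    Function.Periodic H (intVec n k) :=
  fun x => funext (h x k)

theorem ZPeriodicH.exists_abs_le {H : En n → En n → ℝ}
    (hH : Continuous fun q : En n × En n => H q.1 q.2) (hper : ZPeriodicH H) (r : ℝ) :
    ∃ C, ∀ x p, ‖p‖ ≤ r → |H x p| ≤ C := by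
  obtain ⟨C, hC⟩ := ((isCompact_closedBall (0 : En n) √n).prod
    (isCompact_closedBall (0 : En n) r)).exists_bound_of_continuousOn hH.continuousOn
  refine ⟨C, fun x p hp => ?_⟩
  obtain ⟨k, hk⟩ := exists_norm_add_intVec_le x
  rw [← hper x k]
  exact hC (x + intVec n k, p) ⟨mem_closedBall_zero_iff.2 hk, mem_closedBall_zero_iff.2 hp⟩

theorem Coercive.exists_forall_le {H : En n → En n → ℝ} (hco : Coercive H)
    (hH : Continuous fun q : En n × En n => H q.1 q.2) (hper : ZPeriodicH H) :
    ∃ m, ∀ x p, m ≤ H x p := by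
  obtain ⟨r, hr⟩ := hco 0
  obtain ⟨C, hC⟩ := hper.exists_abs_le hH r
  refine ⟨min 0 (-C), fun x p => ?_⟩
  rcases le_total r ‖p‖ with hp | hp
  · exact (min_le_left _ _).trans (hr x p hp)
  · exact (min_le_right _ _).trans (neg_le_of_abs_le (hC x p hp))

variable {H : Bool → En n → En n → ℝ} {c : Bool → ℝ}

theorem exists_discount_constants (hH : ∀ i, Continuous fun q : En n × En n => H i q.1 q.2)
    (hper : ∀ i, ZPeriodicH (H i)) (hco : ∀ i, Coercive (H i)) (hc : ∀ i, 0 < c i) :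
    ∃ (C D : ℝ) (K : NNReal), (∀ i x, |H i x 0| ≤ C) ∧ (∀ i x p, C ≤ H i x p + c i * D) ∧
      ∀ i x p, K ≤ ‖p‖ → C + c i * D < H i x p := by
  choose C₀ hC₀ using fun i => (hper i).exists_abs_le (hH i) 0
  choose m hm using fun i => (hco i).exists_forall_le (hH i) (hper i)
  obtain ⟨C, hC⟩ := Finite.exists_le C₀
  obtain ⟨D, hD⟩ := Finite.exists_le fun i => (C - m i) / c i
  choose r hr using fun i => hco i (C + c i * D + 1)
  obtain ⟨K, hK⟩ := Finite.exists_le fun i => (r i).toNNReal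
  refine ⟨C, D, K, fun i x => (hC₀ i x 0 norm_zero.le).trans (hC i), fun i x p => ?_,
    fun i x p hp => ?_⟩
  · linarith [hm i x p, (div_le_iff₀' (hc i)).1 (hD i)]
  · have hrp : r i ≤ ‖p‖ := (Real.toNNReal_le_iff_le_coe.1 (hK i)).trans hp
    linarith [hr i x p hrp]

theorem exists_periodic_cell_solution (hH : ∀ i, Continuous fun q : En n × En n => H i q.1 q.2)
    (hper : ∀ i, ZPeriodicH (H i)) (hco : ∀ i, Coercive (H i)) (hc : ∀ i, 0 < c i) :
    ∃ (v : Bool → En n → ℝ) (h : ℝ), (∀ i, IsLip (v i)) ∧ (∀ i, ZPeriodic (v i)) ∧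
      (∀ i, IsSubsolution (H i) (c i) (v i) fun x => h + c i * v (!i) x) ∧
      ∀ i, IsSupersolution (H i) (c i) (v i) fun x => h + c i * v (!i) x := by
  obtain ⟨C, D, K, hC, hD, hK⟩ := exists_discount_constants hH hper hco hc
  have hC_nonneg : 0 ≤ C := (abs_nonneg _).trans (hC true 0)
  let l : ℕ → ℝ := fun k => 1 / (k + 1)
  have hl_pos : ∀ k, 0 < l k := fun k => Nat.one_div_pos_of_nat
  have hl_mul : ∀ k, l k * (C / l k) = C := fun k => mul_div_cancel₀ C (hl_pos k).ne'
  have hl_le : ∀ k, |l k| ≤ 1 := fun k => by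
    rw [abs_of_pos (hl_pos k)]
    exact (one_div_le_one_div_of_le one_pos (by simp)).trans_eq one_div_one
  have hl_lim : Tendsto l (hyperfilter ℕ) (𝓝 0) :=
    tendsto_one_div_add_atTop_nhds_zero_nat.mono_left Nat.hyperfilter_le_atTop
  choose u hlip hbound hdiff hsub hsuper huper using fun k =>
    exists_discounted_solution (l := l k) (B := C / l k) hH hc (hl_pos k).le
      (div_nonneg hC_nonneg (hl_pos k).le) (by rwa [hl_mul]) (by rwa [hl_mul]) (by rwa [hl_mul])
  have hlu : ∀ k i x, |l k * u k i x| ≤ C := fun k i x => by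
    rw [abs_mul, abs_of_pos (hl_pos k), ← hl_mul k]
    exact mul_le_mul_of_nonneg_left (hbound k i x) (hl_pos k).le
  obtain ⟨v, h, hv, hvsub, hvsuper, hvper⟩ := exists_cell_solution_of_discounted hH
    (fun i => (hc i).le) hl_lim hl_le hlip hlu hdiff hsub hsuper
  exact ⟨v, h, fun i => ⟨K, hv i⟩,
    fun i x T => hvper _ (fun k => huper k _ fun j => (hper j).periodic T) i x, hvsub, hvsuper⟩

end PeriodicHamiltonian

section Comparison

theorem doubling_inequalities {E : Type*} [NormedAddCommGroup E] [InnerProductSpace ℝ E]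
    [CompleteSpace E] {H : E → E → ℝ} {a A : ℝ} {v w f g : E → ℝ} {x y : E}
    (hsub : IsSubsolution H a v f) (hsuper : IsSupersolution H a w g)
    (hmax : ∀ x' y', v x' - w y' - A * ‖x' - y'‖ ^ 2 ≤ v x - w y - A * ‖x - y‖ ^ 2) :
    H x ((2 * A) • (x - y)) + a * v x ≤ f x ∧ g y ≤ H y ((2 * A) • (x - y)) + a * w y := by
  constructor
  · have hlocal : IsLocalMax (fun z => v z - A * ‖z - y‖ ^ 2) x :=
      .of_forall fun z => by linarith [hmax z y]
    have := hsub _ (contDiff_const_mul_norm_sub_sq A y) x hlocal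
    rwa [(hasGradientAt_const_mul_norm_sub_sq A y x).gradient] at this
  · have hlocal : IsLocalMin (fun z => w z - -A * ‖z - x‖ ^ 2) y :=
      .of_forall fun z => by
        have := hmax x z
        rw [norm_sub_rev x z, norm_sub_rev x y] at this
        linarith
    have := hsuper _ (contDiff_const_mul_norm_sub_sq (-A) x) y hlocal
    rwa [(hasGradientAt_const_mul_norm_sub_sq (-A) x y).gradient, mul_neg, neg_smul, ← smul_neg,
      neg_sub] at this

variable {n : ℕ}

-- Since `w` is `K`-Lipschitz, moving `y` onto `x` increases the doubled function as soon as
-- `K / A ≤ ‖x - y‖`, so the maximum is taken over a compact set.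
theorem exists_max_doubling {v w : En n → ℝ} {K : NNReal} {A : ℝ} (hA : 0 < A)
    (hv : Continuous v) (hvper : ZPeriodic v) (hw : LipschitzWith K w) (hwper : ZPeriodic w) :
    ∃ x y, ‖x‖ ≤ √n ∧
      ∀ x' y', v x' - w y' - A * ‖x' - y'‖ ^ 2 ≤ v x - w y - A * ‖x - y‖ ^ 2 := by
  let Φ : En n × En n → ℝ := fun q => v q.1 - w q.2 - A * ‖q.1 - q.2‖ ^ 2
  have hΦ : Continuous Φ := by
    have := hw.continuous
    fun_prop
  obtain ⟨⟨x, y⟩, ⟨hx, -⟩, hmax⟩ := ((isCompact_closedBall (0 : En n) √n).prod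
    (isCompact_closedBall (0 : En n) (√n + K / A))).exists_isMaxOn
    ⟨0, by simp, Metric.mem_closedBall_self (by positivity)⟩ hΦ.continuousOn
  refine ⟨x, y, mem_closedBall_zero_iff.1 hx, ?_⟩
  have hclose : ∀ x' y', ‖x'‖ ≤ √n → ‖x' - y'‖ ≤ K / A → Φ (x', y') ≤ Φ (x, y) := by
    intro x' y' hx' hxy'
    refine hmax ⟨mem_closedBall_zero_iff.2 hx', mem_closedBall_zero_iff.2 ?_⟩
    rw [norm_sub_rev] at hxy'
    linarith [norm_le_norm_add_norm_sub' y' x']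
  have hball : ∀ x' y', ‖x'‖ ≤ √n → Φ (x', y') ≤ Φ (x, y) := by
    intro x' y' hx'
    rcases le_total ‖x' - y'‖ (K / A) with hnear | hfar
    · exact hclose x' y' hx' hnear
    · refine le_trans ?_ (hclose x' x' hx' (by rw [sub_self, norm_zero]; positivity))
      have hlip := hw.le_add_mul x' y'
      rw [dist_eq_norm] at hlip
      have hKA : K * ‖x' - y'‖ ≤ A * ‖x' - y'‖ ^ 2 := by
        rw [sq, ← mul_assoc]
        exact mul_le_mul_of_nonneg_right ((div_le_iff₀' hA).1 hfar) (norm_nonneg _)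
      simp only [Φ, sub_self, norm_zero, zero_pow two_ne_zero, mul_zero, sub_zero]
      linarith
  intro x' y'
  obtain ⟨k, hk⟩ := exists_norm_add_intVec_le x'
  simpa only [Φ, hvper x' k, hwper y' k, add_sub_add_right_eq_sub] using
    hball (x' + intVec n k) (y' + intVec n k) hk

theorem exists_doubling_estimates {H : En n → En n → ℝ} {a A : ℝ} (hA : 0 < A)
    {v w f g : En n → ℝ} {K : NNReal} (hv : Continuous v) (hvper : ZPeriodic v)
    (hw : LipschitzWith K w) (hwper : ZPeriodic w) (hsub : IsSubsolution H a v f)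
    (hsuper : IsSupersolution H a w g) :
    ∃ x y p, ‖x‖ ≤ √n ∧ ‖x - y‖ ≤ K / A ∧ ‖p‖ ≤ 2 * K ∧ (∀ z, v z - w z ≤ v x - w y) ∧
      H x p + a * v x ≤ f x ∧ g y ≤ H y p + a * w y := by
  obtain ⟨x, y, hx, hmax⟩ := exists_max_doubling hA hv hvper hw hwper
  obtain ⟨hxsub, hysuper⟩ := doubling_inequalities hsub hsuper hmax
  have hdiag : ∀ z, v z - w z ≤ v x - w y - A * ‖x - y‖ ^ 2 := fun z => by
    simpa using hmax z z
  have hAK : A * ‖x - y‖ ≤ K := by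
    rcases (norm_nonneg (x - y)).eq_or_lt with hzero | hpos
    · rw [← hzero, mul_zero]
      exact K.2
    · have hlip := hw.le_add_mul x y
      rw [dist_eq_norm] at hlip
      refine le_of_mul_le_mul_right ?_ hpos
      linarith [hdiag x]
  refine ⟨x, y, (2 * A) • (x - y), hx, (le_div_iff₀' hA).2 hAK, ?_, fun z => ?_, hxsub, hysuper⟩
  · rw [norm_smul, Real.norm_of_nonneg (by positivity)]
    linarith
  · linarith [hdiag z, mul_nonneg hA.le (sq_nonneg ‖x - y‖)]

theorem exists_max_sub_common_gradient {H : En n → En n → ℝ}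
    (hH : Continuous fun q : En n × En n => H q.1 q.2) {a : ℝ} {v w f g : En n → ℝ}
    (hv : Continuous v) (hvper : ZPeriodic v) (hw : IsLip w) (hwper : ZPeriodic w)
    (hf : Continuous f) (hg : Continuous g) (hsub : IsSubsolution H a v f)
    (hsuper : IsSupersolution H a w g) :
    ∃ x p, (∀ z, v z - w z ≤ v x - w x) ∧ H x p + a * v x ≤ f x ∧ g x ≤ H x p + a * w x := by
  obtain ⟨K, hK⟩ := hw
  choose x y p hx hxy hp hmax hxsub hysuper using fun j : ℕ =>
    exists_doubling_estimates (j.cast_add_one_pos (α := ℝ)) hv hvper hK hwper hsub hsuper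
  obtain ⟨⟨x₀, p₀⟩, -, hlim⟩ := ((isCompact_closedBall (0 : En n) √n).prod
    (isCompact_closedBall (0 : En n) (2 * K))).ultrafilter_le_nhds'
    ((hyperfilter ℕ).map fun j => (x j, p j)) (Ultrafilter.mem_map.2 (mem_of_superset univ_mem
      fun j _ => ⟨mem_closedBall_zero_iff.2 (hx j), mem_closedBall_zero_iff.2 (hp j)⟩))
  have hxp : Tendsto (fun j => (x j, p j)) (hyperfilter ℕ) (𝓝 (x₀, p₀)) := hlim
  have hxlim : Tendsto x (hyperfilter ℕ) (𝓝 x₀) := hxp.fst_nhds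
  have hplim : Tendsto p (hyperfilter ℕ) (𝓝 p₀) := hxp.snd_nhds
  have hKlim : Tendsto (fun j : ℕ => (K : ℝ) / (j + 1)) (hyperfilter ℕ) (𝓝 0) :=
    (tendsto_const_nhds.div_atTop (tendsto_atTop_add_const_right _ _
      tendsto_natCast_atTop_atTop)).mono_left Nat.hyperfilter_le_atTop
  have hylim : Tendsto y (hyperfilter ℕ) (𝓝 x₀) := by
    have hsub₀ := squeeze_zero_norm hxy hKlim
    simpa using hxlim.sub hsub₀
  have hvx := (hv.tendsto x₀).comp hxlim
  have hwy := (hK.continuous.tendsto x₀).comp hylim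
  have hHx := (hH.tendsto (x₀, p₀)).comp (hxlim.prodMk_nhds hplim)
  have hHy := (hH.tendsto (x₀, p₀)).comp (hylim.prodMk_nhds hplim)
  exact ⟨x₀, p₀, fun z => ge_of_tendsto' (hvx.sub hwy) fun j => hmax j z,
    le_of_tendsto_of_tendsto' (hHx.add (hvx.const_mul a)) ((hf.tendsto x₀).comp hxlim) hxsub,
    le_of_tendsto_of_tendsto' ((hg.tendsto x₀).comp hylim) (hHy.add (hwy.const_mul a)) hysuper⟩

theorem cell_constants_le {H : Bool → En n → En n → ℝ} {c : Bool → ℝ}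
    (hH : ∀ i, Continuous fun q : En n × En n => H i q.1 q.2) (hc : ∀ i, 0 ≤ c i)
    {v w : Bool → En n → ℝ} {h k : Bool → ℝ}
    (hv : ∀ i, Continuous (v i)) (hvper : ∀ i, ZPeriodic (v i))
    (hw : ∀ i, IsLip (w i)) (hwper : ∀ i, ZPeriodic (w i))
    (hsub : ∀ i, IsSubsolution (H i) (c i) (v i) fun x => h i + c i * v (!i) x)
    (hsuper : ∀ i, IsSupersolution (H i) (c i) (w i) fun x => k i + c i * w (!i) x) :
    c false * k true + c true * k false ≤ c false * h true + c true * h false := by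
  have hwcont : ∀ i, Continuous (w i) := fun i => (hw i).choose_spec.continuous
  choose x p hmax hxsub hxsuper using fun i =>
    exists_max_sub_common_gradient (hH i) (hv i) (hvper i) (hw i) (hwper i)
      (by fun_prop) (by fun_prop) (hsub i) (hsuper i)
  let M : Bool → ℝ := fun i => v i (x i) - w i (x i)
  have hgap : ∀ i, k i - h i ≤ c i * (M (!i) - M i) := fun i => by
    have := mul_le_mul_of_nonneg_left (hmax (!i) (x i)) (hc i)
    simp only [M]
    linarith [hxsub i, hxsuper i]
  have htrue := mul_le_mul_of_nonneg_left (hgap true) (hc false)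
  have hfalse := mul_le_mul_of_nonneg_left (hgap false) (hc true)
  rw [Bool.not_true] at htrue
  rw [Bool.not_false] at hfalse
  linarith

end Comparison

section CellSystem

variable {n : ℕ}

theorem statSubIneq_iff_isSubsolution {H : En n → En n → ℝ} {c : ℝ} {w w' ρ : En n → ℝ} :
    StatSubIneq H c w w' ρ ↔ IsSubsolution H c w fun x => ρ x + c * w' x :=
  forall₄_congr fun _ _ _ _ => by rw [mul_sub, ← add_sub_assoc, sub_le_iff_le_add]

theorem statSuperIneq_iff_isSupersolution {H : En n → En n → ℝ} {c : ℝ} {w w' ρ : En n → ℝ} :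
    StatSuperIneq H c w w' ρ ↔ IsSupersolution H c w fun x => ρ x + c * w' x :=
  forall₄_congr fun _ _ _ _ => by rw [mul_sub, ← add_sub_assoc, le_sub_iff_add_le]

theorem cellSolution_iff {H : Bool → En n → En n → ℝ} {c : Bool → ℝ} {v ρ : Bool → En n → ℝ} :
    CellSolution (H true) (H false) (c true) (c false) (v true) (v false) (ρ true) (ρ false) ↔
      (∀ i, Continuous (v i)) ∧
      (∀ i, IsSubsolution (H i) (c i) (v i) fun x => ρ i x + c i * v (!i) x) ∧
      ∀ i, IsSupersolution (H i) (c i) (v i) fun x => ρ i x + c i * v (!i) x := by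
  simp only [CellSolution, CellSub, CellSuper, statSubIneq_iff_isSubsolution,
    statSuperIneq_iff_isSupersolution, Bool.forall_bool, Bool.not_true, Bool.not_false]
  tauto

end CellSystem

/-- Existence of a solution of the cell (ergodic) system and uniqueness of
`c₂ H̄₁ + c₁ H̄₂`. -/
theorem stmt0 (n : ℕ) (hn : 1 ≤ n) (H₁ H₂ : En n → En n → ℝ)
    (hH₁cont : Continuous fun q : En n × En n => H₁ q.1 q.2)
    (hH₂cont : Continuous fun q : En n × En n => H₂ q.1 q.2)
    (hH₁per : ZPeriodicH H₁) (hH₂per : ZPeriodicH H₂)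
    (hH₁coer : Coercive H₁) (hH₂coer : Coercive H₂)
    (c₁ c₂ : ℝ) (hc₁ : 0 < c₁) (hc₂ : 0 < c₂) :
    ∃ (v₁ v₂ : En n → ℝ) (Hbar₁ Hbar₂ : ℝ),
      IsLip v₁ ∧ IsLip v₂ ∧ ZPeriodic v₁ ∧ ZPeriodic v₂ ∧
      CellSolution H₁ H₂ c₁ c₂ v₁ v₂ (fun _ => Hbar₁) (fun _ => Hbar₂) ∧
      ∀ (w₁ w₂ : En n → ℝ) (Kbar₁ Kbar₂ : ℝ),
        IsLip w₁ → IsLip w₂ → ZPeriodic w₁ → ZPeriodic w₂ →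
        CellSolution H₁ H₂ c₁ c₂ w₁ w₂ (fun _ => Kbar₁) (fun _ => Kbar₂) →
        c₂ * Hbar₁ + c₁ * Hbar₂ = c₂ * Kbar₁ + c₁ * Kbar₂ := by
  let H : Bool → En n → En n → ℝ := fun i => bif i then H₁ else H₂
  let c : Bool → ℝ := fun i => bif i then c₁ else c₂
  have hH : ∀ i, Continuous fun q : En n × En n => H i q.1 q.2 :=
    Bool.forall_bool.2 ⟨hH₂cont, hH₁cont⟩
  have hc : ∀ i, 0 < c i := Bool.forall_bool.2 ⟨hc₂, hc₁⟩
  have hc_nonneg : ∀ i, 0 ≤ c i := fun i => (hc i).le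
  obtain ⟨v, h, hvlip, hvper, hvsub, hvsuper⟩ := exists_periodic_cell_solution hH
    (Bool.forall_bool.2 ⟨hH₂per, hH₁per⟩) (Bool.forall_bool.2 ⟨hH₂coer, hH₁coer⟩) hc
  have hvcont : ∀ i, Continuous (v i) := fun i => (hvlip i).choose_spec.continuous
  refine ⟨v true, v false, h, h, hvlip true, hvlip false, hvper true, hvper false,
    (cellSolution_iff (H := H) (c := c) (ρ := fun _ _ => h)).2 ⟨hvcont, hvsub, hvsuper⟩, ?_⟩
  intro w₁ w₂ k₁ k₂ hw₁lip hw₂lip hw₁per hw₂per hwsol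
  let w : Bool → En n → ℝ := fun i => bif i then w₁ else w₂
  let k : Bool → ℝ := fun i => bif i then k₁ else k₂
  have hwlip : ∀ i, IsLip (w i) := Bool.forall_bool.2 ⟨hw₂lip, hw₁lip⟩
  have hwper : ∀ i, ZPeriodic (w i) := Bool.forall_bool.2 ⟨hw₂per, hw₁per⟩
  obtain ⟨hwcont, hwsub, hwsuper⟩ :=
    (cellSolution_iff (H := H) (c := c) (v := w) (ρ := fun i _ => k i)).1 hwsol
  exact le_antisymm
    (cell_constants_le (h := k) hH hc_nonneg hwcont hwper hvlip hvper hwsub hvsuper)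
    (cell_constants_le (k := k) hH hc_nonneg hvcont hvper hwlip hwper hvsub hwsuper)
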